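/- arXiv:1905.08925 — 3 statements merged into one kernel-verified Lean document; each statement's English description precedes it below -/
import Mathlib

section
/- The divide-and-choose algorithm for 3 agents is a 3/2-approximation of maxmin share fairness: suppose the items are indexed 1,…,m so that agent 1's costs satisfy c_{1,1} ≥ c_{1,2} ≥ … ≥ c_{1,m}, and define the bundles S_1 = {1}, S_2 = {j : j even}, S_3 = {j : j odd, j ≥ 3}. Let agent 2 receive a bundle of minimum c_2-cost among S_1, S_2, S_3; let agent 3 receive a bundle of minimum c_3-cost among the two remaining bundles; and let agent 1 receive the last remaining bundle. Then the resulting allocation satisfies c_i(X_i) ≤ (3/2)·MMS_i for every agent i ∈ {1,2,3}. -/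
/-- The maxmin share of an agent with cost vector `c` over `m` items,
with respect to partitions into `n` (possibly empty) bundles. -/
noncomputable def MMS (n m : ℕ) (c : Fin m → ℝ) : ℝ :=
  ⨅ P : Fin m → Fin n, ⨆ k : Fin n, ∑ j ∈ Finset.univ.filter (fun j => P j = k), c j

/-!
Each single item costs an agent at most her maxmin share, and all items together cost her at most
three times as much. The largest item is therefore acceptable to the divider. In either of the other
two bundles every item `j` can be matched with its predecessor `j - 1`, which lies outside the
bundle and costs the divider at least as much, so the bundle carries at most half of the total. An
agent who takes the cheapest of `r` remaining bundles pays at most a fraction `1 / r` of the total.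
-/

section Alternating

variable {ι M : Type*} [LinearOrder ι] [PredOrder ι] [Fintype ι]
  [AddCommMonoid M] [PartialOrder M] [IsOrderedAddMonoid M]

theorem two_nsmul_sum_le_sum_of_antitone {c : ι → M} (hc : ∀ j, 0 ≤ c j) (hanti : Antitone c)
    {s : Finset ι} (hs : ∀ j ∈ s, Order.pred j ∉ s) : 2 • ∑ j ∈ s, c j ≤ ∑ j, c j := by
  have not_isMin {j : ι} (hj : j ∈ s) : ¬IsMin j := fun hmin => hs j hj (hmin.pred_eq.symm ▸ hj)
  have hinj : Set.InjOn Order.pred (s : Set ι) := fun i hi j hj h =>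
    (Order.pred_eq_pred_iff_of_not_isMin (not_isMin hi) (not_isMin hj)).1 h
  have hdisj : Disjoint s (s.image Order.pred) := by
    simpa only [Finset.disjoint_right, Finset.forall_mem_image] using hs
  calc 2 • ∑ j ∈ s, c j
      ≤ ∑ j ∈ s, c j + ∑ j ∈ s, c (Order.pred j) := by
        rw [two_nsmul]
        gcongr with j
        exact hanti (Order.pred_le j)
    _ = ∑ j ∈ s ∪ s.image Order.pred, c j := by
        rw [Finset.sum_union hdisj, Finset.sum_image hinj]
    _ ≤ ∑ j, c j :=
        Finset.sum_le_sum_of_subset_of_nonneg (Finset.subset_univ _) fun j _ _ => hc j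

end Alternating

section MaxminShare

variable {n m : ℕ} [NeZero n] {c : Fin m → ℝ}

theorem le_mms_of_forall_exists_le {a : ℝ}
    (h : ∀ P : Fin m → Fin n, ∃ k, a ≤ ∑ j with P j = k, c j) : a ≤ MMS n m c := by
  refine le_ciInf fun P => ?_
  obtain ⟨k, hk⟩ := h P
  exact le_ciSup_of_le (Set.finite_range _).bddAbove k hk

theorem le_mms (hc : ∀ j, 0 ≤ c j) (j : Fin m) : c j ≤ MMS n m c :=
  le_mms_of_forall_exists_le fun P =>
    ⟨P j, Finset.single_le_sum (fun i _ => hc i) (by simp)⟩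

variable (n c) in
theorem sum_le_mul_mms : ∑ j, c j ≤ n * MMS n m c := by
  have hn : (0 : ℝ) < n := Nat.cast_pos.2 (NeZero.pos n)
  rw [← div_le_iff₀' hn]
  refine le_mms_of_forall_exists_le fun P =>
    Fintype.exists_le_sum_fiber_of_nsmul_le_sum P (le_of_eq ?_)
  rw [Fintype.card_fin, nsmul_eq_mul, mul_div_cancel₀ _ hn.ne']

theorem card_mul_sum_le_mul_mms (hc : ∀ j, 0 ≤ c j) (P : Fin m → Fin n) {K : Finset (Fin n)}
    {k : Fin n} (hk : ∀ l ∈ K, ∑ j with P j = k, c j ≤ ∑ j with P j = l, c j) :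
    K.card * ∑ j with P j = k, c j ≤ n * MMS n m c :=
  calc K.card * ∑ j with P j = k, c j
      ≤ ∑ l ∈ K, ∑ j with P j = l, c j := by
        simpa only [nsmul_eq_mul] using K.card_nsmul_le_sum _ _ hk
    _ ≤ ∑ l, ∑ j with P j = l, c j :=
        Finset.sum_le_sum_of_subset_of_nonneg K.subset_univ fun _ _ _ =>
          Finset.sum_nonneg fun j _ => hc j
    _ = ∑ j, c j := Finset.sum_fiberwise _ P c
    _ ≤ n * MMS n m c := sum_le_mul_mms n c

end MaxminShare

section DivideAndChoose

variable {m : ℕ}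

/-- The divider's partition, encoded by the bundle each item belongs to: item `0` forms a bundle
of its own, and the remaining items are dealt alternately to bundles `1` and `2`. -/
def dividerPartition (j : Fin m) : Fin 3 :=
  if (j : ℕ) = 0 then 0 else if (j : ℕ) % 2 = 1 then 1 else 2

theorem val_orderPred (j : Fin m) : (Order.pred j).val = j.val - 1 := by
  obtain _ | m := m
  · exact j.elim0
  · cases j using Fin.cases <;> simp

theorem dividerPartition_orderPred_ne {j : Fin m} (hj : dividerPartition j ≠ 0) :
    dividerPartition (Order.pred j) ≠ dividerPartition j := by
  simp only [dividerPartition, val_orderPred] at hj ⊢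
  grind

theorem filter_dividerPartition_eq_zero (hm : 0 < m) :
    Finset.univ.filter (fun j : Fin m => dividerPartition j = 0) = {⟨0, hm⟩} := by
  ext j
  simp only [dividerPartition, Finset.mem_filter, Finset.mem_univ, true_and,
    Finset.mem_singleton, Fin.ext_iff]
  grind

theorem filter_dividerPartition_eq_one :
    Finset.univ.filter (fun j : Fin m => dividerPartition j = 1) =
      Finset.univ.filter (fun j : Fin m => (j : ℕ) % 2 = 1) := by
  grind [dividerPartition]

theorem filter_dividerPartition_eq_two :
    Finset.univ.filter (fun j : Fin m => dividerPartition j = 2) =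
      Finset.univ.filter (fun j : Fin m => (j : ℕ) % 2 = 0 ∧ 2 ≤ (j : ℕ)) := by
  grind [dividerPartition]

theorem sum_dividerPartition_le (hm : 0 < m) {c : Fin m → ℝ} (hc : ∀ j, 0 ≤ c j)
    (hanti : Antitone c) (k : Fin 3) :
    ∑ j with dividerPartition j = k, c j ≤ 3 / 2 * MMS 3 m c := by
  obtain rfl | hk := eq_or_ne k 0
  · rw [filter_dividerPartition_eq_zero hm, Finset.sum_singleton]
    linarith [hc ⟨0, hm⟩, le_mms (n := 3) hc ⟨0, hm⟩]
  · have half : 2 • ∑ j with dividerPartition j = k, c j ≤ ∑ j, c j := by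
      refine two_nsmul_sum_le_sum_of_antitone hc hanti fun j hj hpred => ?_
      obtain rfl := (Finset.mem_filter.1 hj).2
      exact dividerPartition_orderPred_ne hk (Finset.mem_filter.1 hpred).2
    have total := sum_le_mul_mms 3 c
    rw [nsmul_eq_mul] at half
    push_cast at half total
    linarith

end DivideAndChoose

/-- the divide-and-choose algorithm for 3 agents is a
3/2-approximation of MMS fairness.  Items `0,…,m-1` are sorted so that agent 0
(the divider, "agent 1" in the paper) has `c 0 0 ≥ c 0 1 ≥ …`.  The bundles are
`B 0 = {0}` (the single largest item), `B 1` = items in odd positions (the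
2nd, 4th, … largest), `B 2` = items in even positions `≥ 2` (the 3rd, 5th, …
largest).  `π` assigns bundles to agents: agent 1 ("agent 2") chooses first a
cheapest bundle for her, agent 2 ("agent 3") chooses a cheapest remaining
bundle, and agent 0 receives the last one.  Each agent `i`'s cost is at most
`(3/2)·MMS_i`. -/
theorem divideAndChoose_approx (m : ℕ) (hm : 0 < m)
    (c : Fin 3 → Fin m → ℝ) (hc : ∀ i j, 0 ≤ c i j)
    (hsorted : ∀ j j' : Fin m, j ≤ j' → c 0 j' ≤ c 0 j)
    (B : Fin 3 → Finset (Fin m))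
    (hB0 : B 0 = {(⟨0, hm⟩ : Fin m)})
    (hB1 : B 1 = Finset.univ.filter (fun j : Fin m => (j : ℕ) % 2 = 1))
    (hB2 : B 2 = Finset.univ.filter (fun j : Fin m => (j : ℕ) % 2 = 0 ∧ 2 ≤ (j : ℕ)))
    (π : Equiv.Perm (Fin 3))
    (hchoose1 : ∀ k : Fin 3, ∑ j ∈ B (π 1), c 1 j ≤ ∑ j ∈ B k, c 1 j)
    (hchoose2 : ∀ k : Fin 3, k ≠ π 1 → ∑ j ∈ B (π 2), c 2 j ≤ ∑ j ∈ B k, c 2 j) :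
    ∀ i : Fin 3, ∑ j ∈ B (π i), c i j ≤ (3 / 2 : ℝ) * MMS 3 m (c i) := by
  have hB : B = fun k => Finset.univ.filter (fun j => dividerPartition j = k) := by
    funext k
    fin_cases k
    · exact hB0.trans (filter_dividerPartition_eq_zero hm).symm
    · exact hB1.trans filter_dividerPartition_eq_one.symm
    · exact hB2.trans filter_dividerPartition_eq_two.symm
  simp only [hB] at hchoose1 hchoose2
  intro i
  match i with
  | 0 => exact hB ▸ sum_dividerPartition_le hm (hc 0) hsorted (π 0)
  | 1 =>
    have first : ∑ j ∈ B (π 1), c 1 j ≤ MMS 3 m (c 1) := by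
      simpa [hB] using card_mul_sum_le_mul_mms (hc 1) dividerPartition (K := Finset.univ)
        fun k _ => hchoose1 k
    linarith [Finset.sum_nonneg fun j (_ : j ∈ B (π 1)) => hc 1 j]
  | 2 =>
    have second : 2 * ∑ j ∈ B (π 2), c 2 j ≤ 3 * MMS 3 m (c 2) := by
      simpa [hB] using card_mul_sum_le_mul_mms (hc 2) dividerPartition
        (K := Finset.univ.erase (π 1)) fun k hk => hchoose2 k (Finset.ne_of_mem_erase hk)
    linarith
end

section
/- No deterministic strategyproof public-ranking algorithm for 2 agents and 6 chores has approximation ratio smaller than 6/5: fix the public ranking in which, for each agent, item 1 is the largest-cost item and item 6 the smallest, so the algorithm's domain consists of profiles (c_1, c_2) with c_{i,1} ≥ c_{i,2} ≥ … ≥ c_{i,6} ≥ 0 for i = 1,2. For every deterministic algorithm A on this domain that is strategyproof (for every agent i, every such profile c, and every consistent alternative report c'_i, c_i(A(c)_i) ≤ c_i(A(c'_i, c_{−i})_i)) and every ε > 0, there exists a profile (c_1, c_2) in the domain such that, writing x = A(c_1, c_2), some agent i satisfies c_i(x_i) > (6/5 − ε)·MMS_i. -/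
/-- A cost vector over 6 items consistent with the fixed public ranking:
nonnegative and nonincreasing (item 0 has the largest cost, item 5 the smallest). -/
def ConsistentRanked (v : Fin 6 → ℝ) : Prop :=
  (∀ j, 0 ≤ v j) ∧ ∀ j j' : Fin 6, j ≤ j' → v j' ≤ v j

/-!
Suppose every agent with positive maxmin share pays strictly less than `6/5` of it. When both agents
report `(5, 1, 1, 1, 1, 1)`, the agent `i` receiving item `0` receives nothing else. If `i` changes
its report to `(2, 2, 2, 2, 1, 1)`, strategyproofness in both directions forces its bundle to remain
`{0}`, so the other agent still pays `5`. If the other agent now changes its report to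
`(3, 1, 1, 1, 1, 1)`, with maxmin share `4`, its new bundle must still cost at least `5` under
`(5, 1, 1, 1, 1, 1)`; the fairness bound then forces it to take item `0` and at most one more item.
But the remaining items cost `i` at least `6`, while the maxmin share of `i` is `5`.
-/

open Finset

/-- The bundle of agent `i`: the set of items that the allocation `P` gives to it. -/
def bundle {α ι : Type*} [DecidableEq α] [Fintype ι] (P : ι → α) (i : α) : Finset ι :=
  {j | P j = i}

lemma bundle_eq_compl {ι : Type*} [Fintype ι] [DecidableEq ι] (P : ι → Fin 2) {i k : Fin 2}
    (hki : k ≠ i) : bundle P k = (bundle P i)ᶜ := by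
  ext j
  simp only [bundle, mem_filter, mem_univ, true_and, mem_compl]
  omega

section MaxminShare

variable {n m : ℕ} [NeZero n] {c : Fin m → ℝ} {x : ℝ}

lemma MMS_le_of_bundles_le (P : Fin m → Fin n) (hP : ∀ k, ∑ j ∈ bundle P k, c j ≤ x) :
    MMS n m c ≤ x :=
  (ciInf_le (Set.finite_range _).bddBelow P).trans (ciSup_le hP)

lemma le_MMS_of_mul_le_sum (hx : n * x ≤ ∑ j, c j) : x ≤ MMS n m c := by
  refine le_ciInf fun P => ?_
  have htotal : ∑ _k : Fin n, x ≤ ∑ k : Fin n, ∑ j ∈ bundle P k, c j := by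
    simpa [bundle, sum_fiberwise] using hx
  obtain ⟨k, -, hk⟩ := exists_le_of_sum_le univ_nonempty htotal
  exact hk.trans (le_ciSup (f := fun k => ∑ j ∈ bundle P k, c j) (Set.finite_range _).bddAbove k)

lemma MMS_eq_of_even_split (P : Fin m → Fin n) (hP : ∀ k, ∑ j ∈ bundle P k, c j = x) :
    MMS n m c = x := by
  refine (MMS_le_of_bundles_le P fun k => (hP k).le).antisymm (le_MMS_of_mul_le_sum (Eq.le ?_))
  calc n * x = ∑ k : Fin n, ∑ j ∈ bundle P k, c j := by simp [hP]
    _ = ∑ j, c j := sum_fiberwise _ _ _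

end MaxminShare

section Strategyproof

variable {α ι : Type*} [DecidableEq α]

/-- The profile in which agent `i` reports `u` and every other agent reports `v`. -/
def profile (i : α) (u v : ι → ℝ) : α → ι → ℝ := Function.update (fun _ => v) i u

lemma profile_self (i : α) (u v : ι → ℝ) : profile i u v i = u := Function.update_self ..

lemma profile_same (i : α) (v : ι → ℝ) : profile i v v = fun _ => v :=
  Function.update_eq_self i fun _ => v

lemma profile_mem {D : Set (ι → ℝ)} {u v : ι → ℝ} (hu : u ∈ D) (hv : v ∈ D) (i k : α) :
    profile i u v k ∈ D := by
  rcases eq_or_ne k i with rfl | hki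
  · rwa [profile_self]
  · rwa [profile, Function.update_of_ne hki]

lemma profile_swap {i k : Fin 2} (hki : k ≠ i) (u v : ι → ℝ) :
    profile i u v = profile k v u := by
  ext l : 1
  rcases (by omega : l = i ∨ l = k) with rfl | rfl <;> simp [profile, hki, hki.symm]

variable [Fintype ι]

/-- Strategyproofness of the algorithm `A` for reports in the domain `D`: an agent whose true costs
are `c i` cannot lower the cost of its bundle by reporting `v` instead. -/
def IsStrategyproof (D : Set (ι → ℝ)) (A : (α → ι → ℝ) → ι → α) : Prop :=
  ∀ c : α → ι → ℝ, (∀ i, c i ∈ D) → ∀ i, ∀ v ∈ D,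
    ∑ j ∈ bundle (A c) i, c i j ≤ ∑ j ∈ bundle (A (Function.update c i v)) i, c i j

lemma IsStrategyproof.sum_bundle_le {D : Set (ι → ℝ)} {A : (α → ι → ℝ) → ι → α}
    (hSP : IsStrategyproof D A) {u u' v : ι → ℝ} (hu : u ∈ D) (hu' : u' ∈ D) (hv : v ∈ D) (i : α) :
    ∑ j ∈ bundle (A (profile i u v)) i, u j ≤ ∑ j ∈ bundle (A (profile i u' v)) i, u j := by
  simpa [profile] using hSP (profile i u v) (profile_mem hu hv i) i u' hu'

lemma IsStrategyproof.sum_compl_bundle_le [DecidableEq ι] {D : Set (ι → ℝ)}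
    {A : (Fin 2 → ι → ℝ) → ι → Fin 2} (hSP : IsStrategyproof D A) {u v v' : ι → ℝ}
    (hu : u ∈ D) (hv : v ∈ D) (hv' : v' ∈ D) (i : Fin 2) :
    ∑ j ∈ (bundle (A (profile i u v)) i)ᶜ, v j ≤
      ∑ j ∈ (bundle (A (profile i u v')) i)ᶜ, v j := by
  obtain ⟨k, hki⟩ := exists_ne i
  simpa only [profile_swap hki, bundle_eq_compl _ hki] using hSP.sum_bundle_le hv hv' hu k

end Strategyproof

section SurchargeCost

variable {ι : Type*} [DecidableEq ι]

/-- The cost vector charging `1` for every item and an extra `h` for the items of `H`. It makes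
the cost of a bundle depend only on two cardinalities. -/
def surchargeCost (H : Finset ι) (h : ℕ) (j : ι) : ℝ := 1 + if j ∈ H then (h : ℝ) else 0

lemma sum_surchargeCost (H : Finset ι) (h : ℕ) (S : Finset ι) :
    ∑ j ∈ S, surchargeCost H h j = (#S + h * #(S ∩ H) : ℕ) := by
  simp [surchargeCost, sum_add_distrib, mul_comm]

lemma consistentRanked_surchargeCost {H : Finset (Fin 6)} (hH : IsLowerSet (H : Set (Fin 6)))
    (h : ℕ) : ConsistentRanked (surchargeCost H h) := by
  refine ⟨fun j => by unfold surchargeCost; positivity, fun j j' hjj' => ?_⟩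
  have hmem : j' ∈ H → j ∈ H := fun hj' => hH hjj' hj'
  unfold surchargeCost
  split_ifs <;> first | tauto | simp

lemma MMS_surchargeCost {n m x h : ℕ} [NeZero n] {H : Finset (Fin m)} (P : Fin m → Fin n)
    (hP : ∀ k, #(bundle P k) + h * #(bundle P k ∩ H) = x) : MMS n m (surchargeCost H h) = x :=
  MMS_eq_of_even_split P fun k => by rw [sum_surchargeCost, hP k]

end SurchargeCost

/-- The cost vector `(5, 1, 1, 1, 1, 1)`, the starting report of both agents: its only
approximately fair division isolates item `0`. -/
def steepCost : Fin 6 → ℝ := surchargeCost {0} 4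

/-- The cost vector `(3, 1, 1, 1, 1, 1)`, to which the agent without item `0` deviates. -/
def mildCost : Fin 6 → ℝ := surchargeCost {0} 2

/-- The cost vector `(2, 2, 2, 2, 1, 1)`, to which the agent with item `0` deviates. -/
def broadCost : Fin 6 → ℝ := surchargeCost {0, 1, 2, 3} 1

lemma consistentRanked_steepCost : ConsistentRanked steepCost :=
  consistentRanked_surchargeCost (by unfold IsLowerSet; decide) 4

lemma consistentRanked_mildCost : ConsistentRanked mildCost :=
  consistentRanked_surchargeCost (by unfold IsLowerSet; decide) 2

lemma consistentRanked_broadCost : ConsistentRanked broadCost :=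
  consistentRanked_surchargeCost (by unfold IsLowerSet; decide) 1

lemma MMS_steepCost : MMS 2 6 steepCost = 5 :=
  mod_cast MMS_surchargeCost (x := 5) ![0, 1, 1, 1, 1, 1] (by decide)

lemma MMS_mildCost : MMS 2 6 mildCost = 4 :=
  mod_cast MMS_surchargeCost (x := 4) ![0, 0, 1, 1, 1, 1] (by decide)

lemma MMS_broadCost : MMS 2 6 broadCost = 5 :=
  mod_cast MMS_surchargeCost (x := 5) ![0, 0, 1, 1, 0, 1] (by decide)

lemma sum_steepCost_singleton : ∑ j ∈ {0}, steepCost j = 5 := by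
  norm_num [steepCost, surchargeCost]

lemma sum_steepCost_compl_singleton : ∑ j ∈ {0}ᶜ, steepCost j = 5 := by
  rw [steepCost, sum_surchargeCost]
  norm_cast

lemma sum_broadCost_singleton : ∑ j ∈ {0}, broadCost j = 2 := by
  norm_num [broadCost, surchargeCost]

lemma eq_singleton_of_card_le_one {ι : Type*} {S : Finset ι} {j : ι} (hj : j ∈ S) (hS : #S ≤ 1) :
    S = {j} :=
  eq_singleton_iff_unique_mem.mpr ⟨hj, fun _ hl => card_le_one.mp hS _ hl _ hj⟩

lemma eq_singleton_of_steepCost_lt {S : Finset (Fin 6)} (h0 : 0 ∈ S)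
    (hS : ∑ j ∈ S, steepCost j < 6) : S = {0} := by
  rw [steepCost, sum_surchargeCost, inter_singleton_of_mem h0, card_singleton] at hS
  norm_cast at hS
  exact eq_singleton_of_card_le_one h0 (by omega)

lemma eq_singleton_of_broadCost_le {S : Finset (Fin 6)} (hsteep : 5 ≤ ∑ j ∈ S, steepCost j)
    (hbroad : ∑ j ∈ S, broadCost j ≤ 2) : S = {0} := by
  rw [steepCost, sum_surchargeCost] at hsteep
  rw [broadCost, sum_surchargeCost] at hbroad
  norm_cast at hsteep hbroad
  by_cases h0 : 0 ∈ S
  · have hpos : 0 < #(S ∩ {0, 1, 2, 3}) := card_pos.mpr ⟨0, by simp [h0]⟩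
    exact eq_singleton_of_card_le_one h0 (by omega)
  · rw [inter_singleton_of_notMem h0, card_empty] at hsteep
    omega

lemma six_le_sum_compl_broadCost {S : Finset (Fin 6)} (hsteep : 5 ≤ ∑ j ∈ S, steepCost j)
    (hmild : ∑ j ∈ S, mildCost j < 5) : 6 ≤ ∑ j ∈ Sᶜ, broadCost j := by
  rw [steepCost, sum_surchargeCost] at hsteep
  rw [mildCost, sum_surchargeCost] at hmild
  rw [broadCost, sum_surchargeCost]
  norm_cast at hsteep hmild ⊢
  have hcompl : #S + #Sᶜ = 6 := card_add_card_compl S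
  have hlight : #(Sᶜ \ {0, 1, 2, 3}) ≤ 2 :=
    card_le_card (sdiff_subset_sdiff (subset_univ _) subset_rfl)
  have hsplit := card_inter_add_card_sdiff Sᶜ ({0, 1, 2, 3} : Finset (Fin 6))
  omega

lemma IsStrategyproof.bundle_broadCost_eq_singleton {A : (Fin 2 → Fin 6 → ℝ) → Fin 6 → Fin 2}
    (hSP : IsStrategyproof {v | ConsistentRanked v} A) {i : Fin 2}
    (hi : bundle (A (profile i steepCost steepCost)) i = {0}) :
    bundle (A (profile i broadCost steepCost)) i = {0} := by
  have hs := consistentRanked_steepCost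
  have hb := consistentRanked_broadCost
  apply eq_singleton_of_broadCost_le
  · simpa only [hi, sum_steepCost_singleton] using hSP.sum_bundle_le hs hb hs i
  · simpa only [hi, sum_broadCost_singleton] using hSP.sum_bundle_le hb hs hs i

lemma IsStrategyproof.five_le_sum_compl_bundle {A : (Fin 2 → Fin 6 → ℝ) → Fin 6 → Fin 2}
    (hSP : IsStrategyproof {v | ConsistentRanked v} A) {i : Fin 2}
    (hi : bundle (A (profile i steepCost steepCost)) i = {0}) :
    5 ≤ ∑ j ∈ (bundle (A (profile i broadCost mildCost)) i)ᶜ, steepCost j := by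
  simpa only [hSP.bundle_broadCost_eq_singleton hi, sum_steepCost_compl_singleton] using
    hSP.sum_compl_bundle_le consistentRanked_broadCost consistentRanked_steepCost
      consistentRanked_mildCost i

theorem public_ranking_sp_lower_bound_general {A : (Fin 2 → Fin 6 → ℝ) → Fin 6 → Fin 2}
    (hSP : IsStrategyproof {v | ConsistentRanked v} A) :
    ∃ c : Fin 2 → Fin 6 → ℝ, (∀ i, ConsistentRanked (c i)) ∧
      ∃ i, 0 < MMS 2 6 (c i) ∧ 6 / 5 * MMS 2 6 (c i) ≤ ∑ j ∈ bundle (A c) i, c i j := by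
  by_contra! hA
  have happrox {u v : Fin 6 → ℝ} (hu : ConsistentRanked u) (hv : ConsistentRanked v) (i : Fin 2)
      (hpos : 0 < MMS 2 6 u) :
      ∑ j ∈ bundle (A (profile i u v)) i, u j < 6 / 5 * MMS 2 6 u := by
    have h := hA (profile i u v) (profile_mem (D := {v | ConsistentRanked v}) hu hv i) i
    rw [profile_self] at h
    exact h hpos
  have hs := consistentRanked_steepCost
  have hm := consistentRanked_mildCost
  have hb := consistentRanked_broadCost
  obtain ⟨i, hi⟩ : ∃ i, 0 ∈ bundle (A (profile i steepCost steepCost)) i :=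
    ⟨A (fun _ => steepCost) 0, by simp [bundle, profile_same]⟩
  have hsteep := happrox hs hs i (by norm_num [MMS_steepCost])
  have hsingle : bundle (A (profile i steepCost steepCost)) i = {0} :=
    eq_singleton_of_steepCost_lt hi (by linarith [MMS_steepCost])
  obtain ⟨k, hki⟩ := exists_ne i
  have hmild := happrox hm hb k (by norm_num [MMS_mildCost])
  rw [← profile_swap hki, bundle_eq_compl _ hki, MMS_mildCost] at hmild
  have hbroad := happrox hb hm i (by norm_num [MMS_broadCost])
  have hsix := six_le_sum_compl_broadCost (hSP.five_le_sum_compl_bundle hsingle) (by linarith)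
  rw [compl_compl] at hsix
  linarith [MMS_broadCost]

/-- no deterministic strategyproof public-ranking algorithm for
2 agents and 6 chores has approximation ratio smaller than 6/5.  The domain of
`A` is profiles of cost vectors consistent with the fixed public ranking, and
strategyproofness is required against all consistent alternative reports.  For
every such `A` and every `ε > 0` there is a consistent profile on which some
agent's bundle costs more than `(6/5 − ε)·MMS_i`. -/
theorem public_ranking_sp_lower_bound
    (A : (Fin 2 → Fin 6 → ℝ) → (Fin 6 → Fin 2))
    (hSP : ∀ c : Fin 2 → Fin 6 → ℝ, (∀ i, ConsistentRanked (c i)) →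
      ∀ (i : Fin 2) (c'i : Fin 6 → ℝ), ConsistentRanked c'i →
      ∑ j ∈ Finset.univ.filter (fun j => A c j = i), c i j ≤
        ∑ j ∈ Finset.univ.filter (fun j => A (Function.update c i c'i) j = i), c i j)
    (ε : ℝ) (hε : 0 < ε) :
    ∃ c : Fin 2 → Fin 6 → ℝ,
      (∀ i, ConsistentRanked (c i)) ∧
      ∃ i : Fin 2,
        (6 / 5 - ε) * MMS 2 6 (c i) <
          ∑ j ∈ Finset.univ.filter (fun j => A c j = i), c i j := by
  obtain ⟨c, hc, i, hpos, hle⟩ := public_ranking_sp_lower_bound_general hSP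
  exact ⟨c, hc, i, lt_of_lt_of_le (by linarith [mul_pos hε hpos]) hle⟩
end

section
/- There exists a universal constant C such that for all integers n ≥ 2 and m > n there is a randomized algorithm A mapping each profile of rankings (one linear order per agent over the m items) to a probability distribution over allocations, such that: (i) A is strategyproof in expectation: for every agent i, every cost vector c_i consistent with ranking R_i, every profile of rankings of the other agents, and every alternative ranking R'_i, the expected c_i-cost of agent i's bundle under A(R_i, R_{−i}) is at most that under A(R'_i, R_{−i}); and (ii) for every profile of rankings R and every profile of cost vectors (c_1,…,c_n) consistent with R (with each c_i not identically zero), E_{x ∼ A(R)}[max_{i} c_i(x_i)/MMS_i] ≤ C·√(1 + log₂ n). -/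
/-!
Each agent cuts her ranking into consecutive blocks of `n` items. By the Birkhoff–von Neumann
theorem, the uniform fractional allocation, in which every agent holds `1 / n` of every item, is a
lottery over allocations giving each agent at most one item from each of her own blocks. Her
expected cost is then `1 / n` of her total cost whatever she reports, so there is nothing to gain
from misreporting. Ex post, the item from her first block costs at most `MMS`, and an item from a
later block costs at most the average of the block before it, so all of these together cost at most
`1 / n` of the total, which is again at most `MMS`.
-/

section OrderedSemiring

variable {K α : Type*} [Semiring K] [PartialOrder K] [IsOrderedRing K]

theorem sum_mul_le_of_mem_stdSimplex [Fintype α] {w f : α → K} {B : K}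
    (hw : w ∈ stdSimplex K α) (hf : ∀ a, w a ≠ 0 → f a ≤ B) : ∑ a, w a * f a ≤ B :=
  calc ∑ a, w a * f a ≤ ∑ a, w a * B := Finset.sum_le_sum fun a _ => by
        rcases eq_or_ne (w a) 0 with ha | ha
        · simp [ha]
        · exact mul_le_mul_of_nonneg_left (hf a ha) (hw.1 a)
    _ = B := by rw [← Finset.sum_mul, hw.2, one_mul]

theorem mul_sum_le_sum_of_antitone_of_injOn_div {n m : ℕ} {a : Fin m → K} (ha : Antitone a)
    (ha0 : 0 ≤ a) {T : Finset (Fin m)} (hinj : Set.InjOn (fun k : Fin m => (k : ℕ) / n) T)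
    (hT : ∀ k ∈ T, n ≤ k) : n * ∑ k ∈ T, a k ≤ ∑ k, a k := by
  have pos : ∀ (k : T) (_ : Fin n), 1 ≤ (k.1 : ℕ) / n := fun k t =>
    Nat.div_pos (hT k k.2) t.pos
  have lt_self : ∀ (k : T) (t : Fin n), n * ((k.1 : ℕ) / n - 1) + t < k := fun k t => by
    have := Nat.mul_div_le (k.1 : ℕ) n
    have := Nat.le_mul_of_pos_right n (pos k t)
    rw [Nat.mul_sub_one]
    omega
  let precedingBlock (p : T × Fin n) : Fin m := ⟨_, (lt_self p.1 p.2).trans p.1.1.2⟩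
  have precedingBlock_injective : Function.Injective precedingBlock := by
    rintro ⟨k, s⟩ ⟨l, t⟩ h
    have hval := Fin.val_eq_of_eq h
    have hdiv := congrArg (· / n) hval
    have hmod := congrArg (· % n) hval
    simp only [precedingBlock, Nat.mul_add_div s.pos, Nat.div_eq_of_lt s.2, Nat.div_eq_of_lt t.2,
      Nat.mul_add_mod, Nat.mod_eq_of_lt s.2, Nat.mod_eq_of_lt t.2] at hdiv hmod
    have hblock : (k.1 : ℕ) / n = (l.1 : ℕ) / n := by have := pos k s; have := pos l s; omega
    exact Prod.ext (Subtype.ext (hinj k.2 l.2 hblock)) (Fin.ext hmod)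
  calc n * ∑ k ∈ T, a k = ∑ p : T × Fin n, a p.1 := by
        simp [Fintype.sum_prod_type, Finset.mul_sum, ← Finset.sum_coe_sort T]
    _ ≤ ∑ p, a (precedingBlock p) := Finset.sum_le_sum fun p _ => ha (lt_self p.1 p.2).le
    _ = ∑ k ∈ Finset.univ.map ⟨precedingBlock, precedingBlock_injective⟩, a k := by simp
    _ ≤ ∑ k, a k := Finset.sum_le_univ_sum_of_nonneg ha0

end OrderedSemiring

theorem expected_bundle_cost_eq {K α ι : Type*} [Semiring K] [Fintype α]
    [DecidableEq α] [Fintype ι] [DecidableEq ι] (w : (α → ι) → K) (c : α → K) (i : ι) :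
    ∑ x, w x * ∑ j with x j = i, c j = ∑ j, (∑ x with x j = i, w x) * c j := by
  simp only [Finset.sum_filter, Finset.mul_sum, Finset.sum_mul, mul_ite, ite_mul, mul_zero,
    zero_mul]
  exact Finset.sum_comm

section Lottery

variable {K α β ι : Type*} [Field K] [LinearOrder K] [IsStrictOrderedRing K]
  [Fintype α] [DecidableEq α] [Fintype ι] [DecidableEq ι]

theorem exists_perm_lottery_of_mem_doublyStochastic {M : Matrix α α K}
    (hM : M ∈ doublyStochastic K α) :
    ∃ w ∈ stdSimplex K (Equiv.Perm α), ∀ p q, ∑ σ with σ p = q, w σ = M p q := by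
  obtain ⟨w, hw0, hw1, rfl⟩ := exists_eq_sum_perm_of_mem_doublyStochastic hM
  refine ⟨w, ⟨hw0, hw1⟩, fun p q => ?_⟩
  simp [Finset.sum_filter, Matrix.sum_apply, Equiv.Perm.permMatrix, PEquiv.toMatrix_apply, eq_comm]

section Birkhoff

variable [Fintype β] [DecidableEq β]

/-- The fractional matching of the items `p : β × ι` with the slots `(b, i)`, where `(b, i)` stands
for row `b` in the table `π i` of agent `i`: every agent gets an equal share of each item, in the
row where she has placed it. -/
def equalShareMatrix (π : ι → Equiv.Perm (β × ι)) : Matrix (β × ι) (β × ι) K :=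
  Matrix.of fun p q => if (π q.2 p).1 = q.1 then (Fintype.card ι : K)⁻¹ else 0

theorem equalShareMatrix_mem_doublyStochastic [Nonempty ι] (π : ι → Equiv.Perm (β × ι)) :
    equalShareMatrix π ∈ doublyStochastic K (β × ι) := by
  rw [mem_doublyStochastic_iff_sum]
  refine ⟨fun p q => ?_, fun p => ?_, fun q => ?_⟩
  · simp only [equalShareMatrix, Matrix.of_apply]
    split_ifs <;> positivity
  · simp [equalShareMatrix, Fintype.sum_prod_type_right]
  · simp only [equalShareMatrix, Matrix.of_apply]
    rw [Equiv.sum_comp (π q.2) fun p => if p.1 = q.1 then (Fintype.card ι : K)⁻¹ else 0]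
    simp [Fintype.sum_prod_type_right]

theorem exists_equal_share_perm_lottery [Nonempty ι] (π : ι → Equiv.Perm (β × ι)) :
    ∃ w ∈ stdSimplex K (Equiv.Perm (β × ι)),
      (∀ p i, ∑ σ with (σ p).2 = i, w σ = (Fintype.card ι : K)⁻¹) ∧
      ∀ σ, w σ ≠ 0 → ∀ p, (π (σ p).2 p).1 = (σ p).1 := by
  obtain ⟨w, hw, hmarginal⟩ := exists_perm_lottery_of_mem_doublyStochastic
    (equalShareMatrix_mem_doublyStochastic (K := K) π)
  refine ⟨w, hw, fun p i => ?_, fun σ hσ p => ?_⟩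
  · calc ∑ σ with (σ p).2 = i, w σ = ∑ b, ∑ σ with σ p = (b, i), w σ := by
          rw [← Finset.sum_fiberwise _ fun σ : Equiv.Perm (β × ι) => (σ p).1]
          simp only [Finset.filter_filter, Prod.ext_iff, and_comm]
      _ = (Fintype.card ι : K)⁻¹ := by simp [hmarginal, equalShareMatrix]
  · by_contra hne
    have hzero : ∑ τ with τ p = σ p, w τ = 0 := by simp [hmarginal, equalShareMatrix, hne]
    exact hσ ((Finset.sum_eq_zero_iff_of_nonneg fun τ _ => hw.1 τ).mp hzero σ (by simp))

end Birkhoff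

theorem exists_equal_share_lottery_injOn_rows [Finite β] [Nonempty ι] (e : ι → α → β × ι)
    (he : ∀ i, Function.Injective (e i)) :
    ∃ w ∈ stdSimplex K (α → ι),
      (∀ j i, ∑ x with x j = i, w x = (Fintype.card ι : K)⁻¹) ∧
      ∀ x, w x ≠ 0 → ∀ i, Set.InjOn (fun j => (e i j).1) {j | x j = i} := by
  classical
  cases nonempty_fintype β
  obtain ⟨i₀⟩ := ‹Nonempty ι›
  choose π hπ using fun i => Equiv.Perm.exists_extending_pair (e i₀) (e i) (he i₀) (he i)
  obtain ⟨w, hw, hmarginal, hrow⟩ := exists_equal_share_perm_lottery (K := K) π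
  let allocation (σ : Equiv.Perm (β × ι)) : α → ι := fun j => (σ (e i₀ j)).2
  refine ⟨fun x => ∑ σ with allocation σ = x, w σ,
    ⟨fun x => Finset.sum_nonneg fun σ _ => hw.1 σ, ?_⟩, fun j i => ?_,
    fun x hx i j hj k hk hjk => ?_⟩
  · rw [Finset.sum_fiberwise, hw.2]
  · rw [Finset.sum_fiberwise_eq_sum_filter]
    simpa [allocation] using hmarginal (e i₀ j) i
  · obtain ⟨σ, hσ, hwσ⟩ := Finset.exists_ne_zero_of_sum_ne_zero hx
    obtain rfl := (Finset.mem_filter.mp hσ).2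
    have fst_eq : ∀ l, allocation σ l = i → (σ (e i₀ l)).1 = (e i l).1 := by
      rintro l rfl
      rw [← hrow σ hwσ, hπ]
    have same_cell : σ (e i₀ j) = σ (e i₀ k) :=
      Prod.ext ((fst_eq j hj).trans (hjk.trans (fst_eq k hk).symm)) (hj.trans hk.symm)
    exact he i₀ (σ.injective same_cell)

end Lottery

section MMS

variable {n m : ℕ} {c : Fin m → ℝ}

theorem MMS_nonneg (hc : 0 ≤ c) : 0 ≤ MMS n m c :=
  Real.iInf_nonneg fun _ => Real.iSup_nonneg fun _ => Finset.sum_nonneg fun j _ => hc j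

theorem sum_mul_iSup_bundle_div_MMS_le {w : (Fin m → Fin n) → ℝ} {c : Fin n → Fin m → ℝ} {B : ℝ}
    (hw : w ∈ stdSimplex ℝ (Fin m → Fin n)) (hM : ∀ i, 0 < MMS n m (c i)) (hB : 0 ≤ B)
    (hle : ∀ x, w x ≠ 0 → ∀ i, ∑ j with x j = i, c i j ≤ B * MMS n m (c i)) :
    ∑ x, w x * ⨆ i, (∑ j with x j = i, c i j) / MMS n m (c i) ≤ B :=
  sum_mul_le_of_mem_stdSimplex hw fun x hx =>
    Real.iSup_le (fun i => (div_le_iff₀ (hM i)).mpr (hle x hx i)) hB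

variable [NeZero n]

theorem le_MMS {B : ℝ} (h : ∀ P : Fin m → Fin n, ∃ k, B ≤ ∑ j with P j = k, c j) :
    B ≤ MMS n m c :=
  le_ciInf fun P => let ⟨k, hk⟩ := h P; le_ciSup_of_le (Set.finite_range _).bddAbove k hk

theorem item_le_MMS (hc : 0 ≤ c) (j : Fin m) : c j ≤ MMS n m c :=
  le_MMS fun P => ⟨P j, Finset.single_le_sum (fun a _ => hc a) (by simp)⟩

theorem MMS_pos (hc : 0 ≤ c) (hne : ∃ j, c j ≠ 0) : 0 < MMS n m c :=
  let ⟨j, hj⟩ := hne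
  ((hc j).lt_of_ne' hj).trans_le (item_le_MMS hc j)

theorem sum_div_le_MMS (c : Fin m → ℝ) : (∑ j, c j) / n ≤ MMS n m c :=
  le_MMS fun P => Fintype.exists_le_sum_fiber_of_nsmul_le_sum P
    (by simp [mul_div_cancel₀ _ (NeZero.ne (n : ℝ))])

theorem sum_le_two_mul_MMS_of_injOn_div {r : Fin m ≃ Fin m} (hc : 0 ≤ c) (hr : Antitone (c ∘ r))
    {S : Finset (Fin m)} (hS : Set.InjOn (fun j => (r.symm j : ℕ) / n) S) :
    ∑ j ∈ S, c j ≤ 2 * MMS n m c := by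
  have first_block : ∑ j ∈ S with r.symm j < n, c j ≤ MMS n m c := by
    have hcard : Finset.card {j ∈ S | r.symm j < n} ≤ 1 := by
      simp only [Finset.card_le_one, Finset.mem_filter]
      rintro j ⟨hj, hjn⟩ k ⟨hk, hkn⟩
      exact hS hj hk (by simp only [Nat.div_eq_of_lt hjn, Nat.div_eq_of_lt hkn])
    calc _ ≤ Finset.card {j ∈ S | r.symm j < n} • MMS n m c :=
          Finset.sum_le_card_nsmul _ _ _ fun j _ => item_le_MMS hc j
      _ ≤ 1 • MMS n m c := nsmul_le_nsmul_left (MMS_nonneg hc) hcard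
      _ = MMS n m c := one_nsmul _
  have later_blocks : ∑ j ∈ S with ¬ r.symm j < n, c j ≤ MMS n m c := by
    let T := Finset.map r.symm.toEmbedding {j ∈ S | ¬ r.symm j < n}
    have hinj : Set.InjOn (fun k : Fin m => (k : ℕ) / n) T := by
      intro k hk l hl hkl
      simp only [T, Finset.mem_coe, Finset.mem_map_equiv, Equiv.symm_symm, Finset.mem_filter]
        at hk hl
      exact r.injective (hS hk.1 hl.1 (by simpa using hkl))
    have hT : n * ∑ k ∈ T, (c ∘ r) k ≤ ∑ k, (c ∘ r) k :=
      mul_sum_le_sum_of_antitone_of_injOn_div hr (fun k => hc (r k)) hinj (by simp [T])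
    refine le_trans ?_ (sum_div_le_MMS c)
    rw [le_div_iff₀' (by simp [NeZero.pos]), ← Equiv.sum_comp r c]
    simpa [T] using hT
  rw [← Finset.sum_filter_add_sum_filter_not S (fun j => r.symm j < n)]
  linarith

end MMS

/-- The position of a rank in the table with rows of length `n` filled in row by row; its row is
the index of the block containing that rank. -/
def blockPosition (n m : ℕ) [NeZero n] (k : Fin m) : Fin m × Fin n :=
  finProdFinEquiv.symm (k.castLE (Nat.le_mul_of_pos_right m (NeZero.pos n)))

theorem blockPosition_injective (n m : ℕ) [NeZero n] :
    Function.Injective (blockPosition n m) :=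
  finProdFinEquiv.symm.injective.comp (Fin.castLE_injective _)

theorem rand_ordinal_sp_sqrtlog_approx_general (n m : ℕ) [NeZero n] :
    ∃ A : (Fin n → (Fin m ≃ Fin m)) → ((Fin m → Fin n) → ℝ),
      (∀ R, A R ∈ stdSimplex ℝ (Fin m → Fin n)) ∧
      (∀ R i (c : Fin m → ℝ), ∑ x, A R x * ∑ j with x j = i, c j = (∑ j, c j) / n) ∧
      ∀ R x, A R x ≠ 0 → ∀ i (c : Fin m → ℝ), 0 ≤ c → Antitone (c ∘ R i) →
        ∑ j with x j = i, c j ≤ 2 * MMS n m c := by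
  choose A hA hshare hinj using fun R : Fin n → (Fin m ≃ Fin m) =>
    exists_equal_share_lottery_injOn_rows (K := ℝ) (fun i j => blockPosition n m ((R i).symm j))
      fun i => (blockPosition_injective n m).comp (R i).symm.injective
  refine ⟨A, hA, fun R i c => ?_, fun R x hx i c hc hr => ?_⟩
  · simp only [expected_bundle_cost_eq, hshare, Fintype.card_fin, ← Finset.mul_sum]
    exact inv_mul_eq_div _ _
  · refine sum_le_two_mul_MMS_of_injOn_div hc hr fun j hj k hk hjk => ?_
    exact hinj R x hx i (by simpa using hj) (by simpa using hk) (Fin.ext hjk)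

/-- there is a universal constant `C` such that for all `n ≥ 2` and
`m > n` there is a randomized ordinal algorithm `A` (mapping a profile of rankings
— each an equiv `Fin m ≃ Fin m`, position `k` holding item `R i k`, earlier
positions having weakly larger cost — to a probability distribution over
allocations `Fin m → Fin n`, encoded by nonnegative weights summing to 1) that is
strategyproof in expectation and achieves expected approximation ratio at most
`C·√(1 + log₂ n)`: `E[max_i c_i(x_i)/MMS_i] ≤ C·√(1 + log₂ n)` for every profile
of consistent, nonnegative, not-identically-zero cost vectors. -/
theorem rand_ordinal_sp_sqrtlog_approx :
    ∃ C : ℝ, 0 < C ∧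
      ∀ n m : ℕ, 2 ≤ n → n < m →
        ∃ A : (Fin n → (Fin m ≃ Fin m)) → ((Fin m → Fin n) → ℝ),
          -- A R is a probability distribution over allocations
          (∀ R, (∀ x, 0 ≤ A R x) ∧ ∑ x : Fin m → Fin n, A R x = 1) ∧
          -- (i) strategyproof in expectation
          (∀ (R : Fin n → (Fin m ≃ Fin m)) (i : Fin n) (ci : Fin m → ℝ),
            (∀ j, 0 ≤ ci j) →
            (∀ k k' : Fin m, k ≤ k' → ci (R i k') ≤ ci (R i k)) →
            ∀ R'i : Fin m ≃ Fin m,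
              ∑ x : Fin m → Fin n, A R x *
                  ∑ j ∈ Finset.univ.filter (fun j => x j = i), ci j ≤
                ∑ x : Fin m → Fin n, A (Function.update R i R'i) x *
                  ∑ j ∈ Finset.univ.filter (fun j => x j = i), ci j) ∧
          -- (ii) expected approximation ratio at most C·√(1 + log₂ n)
          (∀ (R : Fin n → (Fin m ≃ Fin m)) (c : Fin n → Fin m → ℝ),
            (∀ i j, 0 ≤ c i j) →
            (∀ i : Fin n, ∃ j, c i j ≠ 0) →
            (∀ (i : Fin n) (k k' : Fin m), k ≤ k' → c i (R i k') ≤ c i (R i k)) →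
            ∑ x : Fin m → Fin n, A R x *
                (⨆ i : Fin n,
                  (∑ j ∈ Finset.univ.filter (fun j => x j = i), c i j) /
                    MMS n m (c i)) ≤
              C * Real.sqrt (1 + Real.logb 2 (n : ℝ))) := by
  refine ⟨2, two_pos, fun n m hn _ => ?_⟩
  have : NeZero n := ⟨by lia⟩
  obtain ⟨A, hA, hshare, hMMS⟩ := rand_ordinal_sp_sqrtlog_approx_general n m
  refine ⟨A, hA, fun R i c _ _ R' => (hshare R i c).trans_le (hshare _ i c).ge,
    fun R c hc hne hr => ?_⟩
  have hlog : 0 ≤ Real.logb 2 n := Real.logb_nonneg one_lt_two (by exact_mod_cast NeZero.one_le)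
  calc _ ≤ 2 := sum_mul_iSup_bundle_div_MMS_le (hA R) (fun i => MMS_pos (hc i) (hne i)) zero_le_two
        fun x hx i => hMMS R x hx i (c i) (hc i) fun k k' => hr i k k'
    _ ≤ 2 * √(1 + Real.logb 2 n) :=
        le_mul_of_one_le_right zero_le_two (Real.one_le_sqrt.mpr (by linarith))
end
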